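/- Let t0 > 0, let (X, μ) be a measure space, let Λ : X → [0,∞) be measurable, and let b : [t0,∞) → ℝ be a measurable function such that m/t ≤ b(t) ≤ M/t for every t ≥ t0, where M ≥ m > 0 are real constants. Set μ0 := min{m, 2}. Let u : [t0,∞) × X → ℝ be such that for every ξ ∈ X the function t ↦ u(t,ξ) is a solution of the damped oscillator equation u'' + b(t)u' + Λ(ξ)²u = 0, and such that for each t ≥ t0 the functions ξ ↦ u(t,ξ) and ξ ↦ ∂_t u(t,ξ) are measurable. Then for every t ≥ t0 one has ∫_X [ (∂_t u(t,ξ))² + Λ(ξ)²·u(t,ξ)² ] dμ(ξ) ≤ e^{m(M+8)} · ( ∫_X [ 4(∂_t u(t0,ξ))² + (Λ(ξ)² + 2/t0²)·u(t0,ξ)² ] dμ(ξ) ) · (t0/t)^{μ0}. -/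

import Mathlib

open Real Set Filter MeasureTheory intervalIntegral

/-- A solution of the damped oscillator equation `u'' + b(t) u' + λ² u = 0` on `[t0, ∞)`:
a `C¹` function `u` (with derivative `u'`) whose derivative is locally absolutely continuous
(i.e. it is the integral of a locally integrable function `w`) and which satisfies the
equation almost everywhere on `[t0, ∞)`. -/
def IsDampedSol (t0 : ℝ) (b : ℝ → ℝ) (lam : ℝ) (u u' : ℝ → ℝ) : Prop :=
  (∀ t ∈ Ici t0, HasDerivAt u (u' t) t) ∧
  ContinuousOn u' (Ici t0) ∧
  ∃ w : ℝ → ℝ,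
    (∀ T ≥ t0, IntervalIntegrable w volume t0 T) ∧
    (∀ t ∈ Ici t0, u' t = u' t0 + ∫ s in t0..t, w s) ∧
    (∀ᵐ t ∂(volume.restrict (Ici t0)), w t + b t * u' t + lam ^ 2 * u t = 0)

/-!
In the Euler variables `x = u`, `y = t u'`, `z = λ t` the coefficient `b` becomes `β = t b ∈ [m, M]`
and the equation reads `t x' = y`, `t y' = (1 - β) y - z² x`. The estimate is proved pointwise in
the frequency, with `m ≤ 2`, by a different argument on either side of `z = max 1 m`.

For low frequencies and `m ≤ 1`, the form `t ^ (m - 2) (y² + ((1 - m / 2) z² + m (2 - m)) x²)` is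
nonincreasing. Its coercivity in `x` degenerates as `m → 2`, so for `1 ≤ m ≤ 2` one integrates the
equation twice instead: `|u| ≤ S t ^ (1 - m / 2)` on an interval where `z ≤ 2` implies the same
bound with `S` replaced by `2 S / 3` plus a multiple of the initial data, hence a bound on `S`.

For high frequencies, adding the cross term `m x y` to the energy `y² + z² x²` distributes the
damping equally between both components. The remaining error is `O(1 / z)` relative to the energy,
which is integrable in `log t` and is absorbed by the weight `exp (m (M + 1) / z)`.
-/

/-! ### Differential inequalities for absolutely continuous functions -/

section AbsolutelyContinuous

variable {f g h γ w : ℝ → ℝ} {a b : ℝ}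

lemma absolutelyContinuousOnInterval_congr (hf : AbsolutelyContinuousOnInterval f a b)
    (hfg : EqOn f g (uIcc a b)) : AbsolutelyContinuousOnInterval g a b := by
  refine Tendsto.congr' (eventually_inf_principal.mpr (Eventually.of_forall fun E hE => ?_)) hf
  refine Finset.sum_congr rfl fun i hi => ?_
  rw [hfg (hE.1 i hi).1, hfg (hE.1 i hi).2]

lemma absolutelyContinuousOnInterval_of_eq_add_integral (hw : IntervalIntegrable w volume a b)
    (hf : ∀ x ∈ uIcc a b, f x = f a + ∫ s in a..x, w s) :
    AbsolutelyContinuousOnInterval f a b := by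
  have hconst : AbsolutelyContinuousOnInterval (fun _ => f a) a b :=
    contDiffOn_const.absolutelyContinuousOnInterval
  exact absolutelyContinuousOnInterval_congr
    (hconst.fun_add (hw.absolutelyContinuousOnInterval_intervalIntegral left_mem_uIcc))
    fun x hx => (hf x hx).symm

lemma absolutelyContinuousOnInterval_of_contDiffAt (hab : a ≤ b)
    (hf : ∀ t ∈ Icc a b, ContDiffAt ℝ 1 f t) : AbsolutelyContinuousOnInterval f a b :=
  ContDiffOn.absolutelyContinuousOnInterval fun t ht =>
    (hf t (uIcc_of_le hab ▸ ht)).contDiffWithinAt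

lemma absolutelyContinuousOnInterval_rpow_const (ha : 0 < a) (hab : a ≤ b) (p : ℝ) :
    AbsolutelyContinuousOnInterval (fun t => t ^ p) a b :=
  absolutelyContinuousOnInterval_of_contDiffAt hab fun _ ht =>
    contDiffAt_rpow_const_of_ne (ha.trans_le ht.1).ne'

lemma le_of_ae_deriv_nonpos (hab : a ≤ b) (hf : AbsolutelyContinuousOnInterval f a b)
    (hd : ∀ᵐ t, t ∈ Ioo a b → deriv f t ≤ 0) : f b ≤ f a := by
  rw [← sub_nonpos, ← hf.integral_deriv_eq_sub, integral_of_le hab, integral_Ioc_eq_integral_Ioo]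
  exact integral_nonpos_of_ae ((ae_restrict_iff' measurableSet_Ioo).mpr hd)

lemma mul_le_mul_of_ae_deriv_le (hab : a ≤ b) (hf : AbsolutelyContinuousOnInterval f a b)
    (hg : AbsolutelyContinuousOnInterval g a b) (hg_nonneg : ∀ t ∈ Ioo a b, 0 ≤ g t)
    (hg' : ∀ t ∈ Ioo a b, HasDerivAt g (γ t * g t) t)
    (hd : ∀ᵐ t, t ∈ Ioo a b → γ t * f t + deriv f t ≤ 0) : g b * f b ≤ g a * f a := by
  refine le_of_ae_deriv_nonpos hab (hg.fun_mul hf) ?_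
  filter_upwards [hd, hf.ae_differentiableAt] with t ht hft htI
  have hf' := (hft (uIcc_of_le hab ▸ Ioo_subset_Icc_self htI)).hasDerivAt
  calc deriv (fun t => g t * f t) t = g t * (γ t * f t + deriv f t) := by
        rw [((hg' t htI).fun_mul hf').deriv]; ring
    _ ≤ 0 := mul_nonpos_of_nonneg_of_nonpos (hg_nonneg t htI) (ht htI)

lemma nonpos_of_ae_deriv_nonpos_of_pos (hab : a ≤ b)
    (hf : AbsolutelyContinuousOnInterval f a b) (ha : f a ≤ 0)
    (hd : ∀ᵐ t, t ∈ Ioo a b → 0 < f t → deriv f t ≤ 0) : f b ≤ 0 := by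
  -- `f` is nonincreasing after the last time `τ` at which it is nonpositive.
  have hcont : ContinuousOn f (Icc a b) := uIcc_of_le hab ▸ hf.continuousOn
  have hcompact : IsCompact (Icc a b ∩ f ⁻¹' Iic 0) :=
    isCompact_Icc.of_isClosed_subset (hcont.preimage_isClosed_of_isClosed isClosed_Icc isClosed_Iic)
      inter_subset_left
  obtain ⟨τ, ⟨hτ, hfτ⟩, hτ_last⟩ := hcompact.exists_isGreatest ⟨a, left_mem_Icc.mpr hab, ha⟩
  have hsub : uIcc τ b ⊆ uIcc a b := by
    rw [uIcc_of_le hab, uIcc_of_le hτ.2]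
    exact Icc_subset_Icc_left hτ.1
  refine (le_of_ae_deriv_nonpos hτ.2 (hf.mono hsub) ?_).trans hfτ
  filter_upwards [hd] with t ht htI
  refine ht ⟨hτ.1.trans_lt htI.1, htI.2⟩ (lt_of_not_ge fun hft => ?_)
  exact htI.1.not_ge (hτ_last ⟨⟨hτ.1.trans htI.1.le, htI.2.le⟩, hft⟩)

lemma le_of_ae_mul_deriv_le (hab : a ≤ b) (hf : AbsolutelyContinuousOnInterval f a b)
    (hh : AbsolutelyContinuousOnInterval h a b) (h_nonneg : ∀ t ∈ Ioo a b, 0 ≤ h t)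
    (ha : f a ≤ h a) (hd : ∀ᵐ t, t ∈ Ioo a b → f t * deriv f t ≤ |f t| * deriv h t) :
    f b ≤ h b := by
  refine sub_nonpos.mp (nonpos_of_ae_deriv_nonpos_of_pos (f := fun t => f t - h t) hab
    (hf.fun_sub hh) (sub_nonpos.mpr ha) ?_)
  filter_upwards [hd, hf.ae_differentiableAt, hh.ae_differentiableAt] with t ht hft hht htI hpos
  have htI' : t ∈ uIcc a b := uIcc_of_le hab ▸ Ioo_subset_Icc_self htI
  have hf_pos : 0 < f t := (h_nonneg t htI).trans_lt (sub_pos.mp hpos)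
  have hderiv := ht htI
  rw [abs_of_pos hf_pos] at hderiv
  rw [((hft htI').hasDerivAt.fun_sub (hht htI').hasDerivAt).deriv, sub_nonpos]
  exact le_of_mul_le_mul_left hderiv hf_pos

lemma abs_le_of_ae_mul_deriv_le (hab : a ≤ b) (hf : AbsolutelyContinuousOnInterval f a b)
    (hh : AbsolutelyContinuousOnInterval h a b) (h_nonneg : ∀ t ∈ Ioo a b, 0 ≤ h t)
    (ha : |f a| ≤ h a) (hd : ∀ᵐ t, t ∈ Ioo a b → f t * deriv f t ≤ |f t| * deriv h t) :
    |f b| ≤ h b := by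
  rw [abs_le'] at ha ⊢
  refine ⟨le_of_ae_mul_deriv_le hab hf hh h_nonneg ha.1 hd,
    le_of_ae_mul_deriv_le (f := fun t => -f t) hab hf.fun_neg hh h_nonneg ha.2 ?_⟩
  simpa only [deriv.fun_neg, abs_neg, neg_mul_neg] using hd

end AbsolutelyContinuous

/-! ### Regularity of solutions -/

namespace IsDampedSol

variable {t0 t1 T lam : ℝ} {b u u' : ℝ → ℝ}

lemma hasDerivAt (h : IsDampedSol t0 b lam u u') {t : ℝ} (ht : t0 ≤ t) : HasDerivAt u (u' t) t :=
  h.1 t ht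

lemma abs_frequency (h : IsDampedSol t0 b lam u u') : IsDampedSol t0 b |lam| u u' := by
  simpa only [IsDampedSol, sq_abs] using h

lemma mono (h : IsDampedSol t0 b lam u u') (h01 : t0 ≤ t1) : IsDampedSol t1 b lam u u' := by
  obtain ⟨hu, hu', w, hw, hu'w, heq⟩ := h
  have hsub : Ici t1 ⊆ Ici t0 := Ici_subset_Ici.mpr h01
  refine ⟨fun t ht => hu t (hsub ht), hu'.mono hsub, w,
    fun T hT => (hw t1 h01).symm.trans (hw T (h01.trans hT)), fun t ht => ?_,
    ae_restrict_of_ae_restrict_of_subset hsub heq⟩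
  rw [hu'w t (hsub ht), hu'w t1 h01, add_assoc,
    integral_add_adjacent_intervals (hw t1 h01) ((hw t1 h01).symm.trans (hw t (hsub ht)))]

lemma absolutelyContinuousOnInterval (h : IsDampedSol t0 b lam u u') (hT : t0 ≤ T) :
    AbsolutelyContinuousOnInterval u t0 T := by
  have hint : ∀ x, t0 ≤ x → IntervalIntegrable u' volume t0 x := fun x hx =>
    (h.2.1.mono (uIcc_of_le hx ▸ Icc_subset_Ici_self)).intervalIntegrable
  refine absolutelyContinuousOnInterval_of_eq_add_integral (hint T hT) fun x hx => ?_
  rw [uIcc_of_le hT] at hx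
  rw [integral_eq_sub_of_hasDerivAt (fun t ht => h.hasDerivAt (uIcc_of_le hx.1 ▸ ht).1)
    (hint x hx.1), add_sub_cancel]

lemma absolutelyContinuousOnInterval_deriv (h : IsDampedSol t0 b lam u u') (hT : t0 ≤ T) :
    AbsolutelyContinuousOnInterval u' t0 T := by
  obtain ⟨-, -, w, hw, hu'w, -⟩ := h
  exact absolutelyContinuousOnInterval_of_eq_add_integral (hw T hT) fun x hx =>
    hu'w x (uIcc_of_le hT ▸ hx).1

lemma ae_hasDerivAt_deriv (h : IsDampedSol t0 b lam u u') :
    ∀ᵐ t, t0 < t → HasDerivAt u' (-(b t * u' t) - lam ^ 2 * u t) t := by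
  obtain ⟨-, -, w, hw, hu'w, heq⟩ := h
  have hderiv : ∀ᵐ t, ∀ n : ℕ, t ∈ uIcc t0 (t0 + n) → ∀ c ∈ uIcc t0 (t0 + n),
      HasDerivAt (fun x => ∫ s in c..x, w s) (w t) t :=
    ae_all_iff.mpr fun n =>
      (hw (t0 + n) (le_add_of_nonneg_right n.cast_nonneg)).ae_hasDerivAt_integral
  rw [ae_restrict_iff' measurableSet_Ici] at heq
  filter_upwards [hderiv, heq] with t ht hwt htt
  obtain ⟨n, hn⟩ := exists_nat_ge (t - t0)
  have hmem : t ∈ uIcc t0 (t0 + n) := Icc_subset_uIcc ⟨htt.le, by linarith⟩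
  have hw_eq : w t = -(b t * u' t) - lam ^ 2 * u t := by linarith [hwt htt.le]
  rw [← hw_eq]
  refine ((ht n hmem t0 left_mem_uIcc).const_add (u' t0)).congr_of_eventuallyEq ?_
  filter_upwards [Ioi_mem_nhds htt] with x hx using hu'w x (mem_Ioi.mp hx).le

end IsDampedSol

/-! ### Energies in the Euler variables -/

/-- The energy `(u')² + λ² u²` of the undamped oscillator at position `x` and velocity `v`. -/
def oscEnergy (lam x v : ℝ) : ℝ := v ^ 2 + lam ^ 2 * x ^ 2

/-- The quadratic form in the initial data `x = u(t)`, `v = u'(t)` that controls the energy at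
later times. The term `2 / t²` keeps it coercive as `λ → 0`, where `oscEnergy` is blind to `x`. -/
noncomputable def oscData (lam t x v : ℝ) : ℝ := 4 * v ^ 2 + (lam ^ 2 + 2 / t ^ 2) * x ^ 2

/-- A modified energy in the Euler variables `x = u`, `y = t u'`, `z = λ t`, in which the
oscillator equation reads `t x' = y`, `t y' = (1 - t b) y - z² x`, `t z' = z`. -/
def eulerForm (c d p z x y : ℝ) : ℝ := y ^ 2 + (c * z ^ 2 + d) * x ^ 2 + p * (x * y)

/-- The derivative `t d/dt` of `eulerForm` with respect to `log t` along solutions of the oscillator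
equation, where `β = t b(t)`. -/
def eulerRate (c d p z β x y : ℝ) : ℝ :=
  2 * (y * ((1 - β) * y - z ^ 2 * x)) + 2 * (c * z ^ 2) * x ^ 2
    + 2 * (c * z ^ 2 + d) * (x * y) + p * (y ^ 2 + x * ((1 - β) * y - z ^ 2 * x))

section Energies

variable {m lam t T x v : ℝ}

lemma oscEnergy_nonneg : 0 ≤ oscEnergy lam x v :=
  add_nonneg (sq_nonneg v) (mul_nonneg (sq_nonneg lam) (sq_nonneg x))

lemma oscData_nonneg : 0 ≤ oscData lam t x v := by
  unfold oscData; positivity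

lemma oscEnergy_abs : oscEnergy |lam| x v = oscEnergy lam x v := by
  simp only [oscEnergy, sq_abs]

lemma oscData_abs : oscData |lam| t x v = oscData lam t x v := by
  simp only [oscData, sq_abs]

lemma oscEnergy_le_oscData : oscEnergy lam x v ≤ oscData lam t x v := by
  have : 0 ≤ 2 / t ^ 2 * x ^ 2 := by positivity
  unfold oscEnergy oscData
  nlinarith [sq_nonneg v]

lemma sq_abs_add_abs_div_le_oscData :
    (|v| + |x| / t) ^ 2 ≤ 3 / 4 * oscData lam t x v := by
  have hcauchy : (|v| + |x| / t) ^ 2 ≤ 3 / 4 * (4 * |v| ^ 2 + 2 * (|x| / t) ^ 2) := by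
    nlinarith [sq_nonneg (2 * |v| - |x| / t)]
  have hdata : oscData lam t x v = 4 * |v| ^ 2 + 2 * (|x| / t) ^ 2 + lam ^ 2 * x ^ 2 := by
    rw [oscData, div_pow, sq_abs, sq_abs]; ring
  linarith [mul_nonneg (sq_nonneg lam) (sq_nonneg x)]

lemma sq_mul_le_sq_mul (ht : 0 ≤ t) (htT : t ≤ T) : (lam * t) ^ 2 ≤ (lam * T) ^ 2 := by
  rw [mul_pow, mul_pow]
  gcongr

lemma rpow_mul_oscEnergy (ht : 0 < t) :
    t ^ m * oscEnergy lam x v = t ^ (m - 2) * oscEnergy (lam * t) x (t * v) := by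
  rw [rpow_sub ht, rpow_two, oscEnergy, oscEnergy]
  field_simp

lemma rpow_mul_oscData (ht : 0 < t) :
    t ^ m * oscData lam t x v
      = t ^ (m - 2) * (4 * (t * v) ^ 2 + ((lam * t) ^ 2 + 2) * x ^ 2) := by
  rw [rpow_sub ht, rpow_two, oscData]
  field_simp

lemma hasDerivAt_rpow_mul_exp_div (ht : 0 < t) (r K : ℝ) :
    HasDerivAt (fun s => s ^ r * exp (K / s)) ((r - K / t) / t * (t ^ r * exp (K / t))) t := by
  have hpow := hasDerivAt_rpow_const (p := r) (Or.inl ht.ne')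
  have hexp := ((hasDerivAt_inv ht.ne').const_mul K).exp
  simp only [← div_eq_mul_inv] at hexp
  refine (hpow.fun_mul hexp).congr_deriv ?_
  rw [rpow_sub_one ht.ne']
  field_simp
  ring

end Energies

namespace IsDampedSol

variable {t0 T lam : ℝ} {b u u' : ℝ → ℝ}

lemma ae_hasDerivAt_eulerForm (h : IsDampedSol t0 b lam u u') (c d p : ℝ) :
    ∀ᵐ t, t0 < t → 0 < t →
      HasDerivAt (fun s => eulerForm c d p (lam * s) (u s) (s * u' s))
        (eulerRate c d p (lam * t) (t * b t) (u t) (t * u' t) / t) t := by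
  filter_upwards [h.ae_hasDerivAt_deriv] with t hu' htt ht
  have hx := h.hasDerivAt htt.le
  have hy := (hasDerivAt_id' t).fun_mul (hu' htt)
  have hz := (hasDerivAt_id' t).const_mul lam
  refine ((hy.fun_pow 2).fun_add ((((hz.fun_pow 2).const_mul c).add_const d).fun_mul
    (hx.fun_pow 2)) |>.fun_add ((hx.fun_mul hy).const_mul p)).congr_deriv ?_
  rw [eulerRate]
  field_simp
  ring

lemma absolutelyContinuousOnInterval_eulerForm (h : IsDampedSol t0 b lam u u') (hT : t0 ≤ T)
    (c d p : ℝ) :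
    AbsolutelyContinuousOnInterval (fun t => eulerForm c d p (lam * t) (u t) (t * u' t)) t0 T := by
  have hx := h.absolutelyContinuousOnInterval hT
  have hid : AbsolutelyContinuousOnInterval (fun t : ℝ => t) t0 T :=
    contDiffOn_id.absolutelyContinuousOnInterval
  have hy := hid.fun_mul (h.absolutelyContinuousOnInterval_deriv hT)
  have hq : AbsolutelyContinuousOnInterval (fun t => c * (lam * t) ^ 2 + d) t0 T :=
    ContDiffOn.absolutelyContinuousOnInterval (by fun_prop)
  simp only [eulerForm, pow_two (_ * u' _), pow_two (u _)]
  exact ((hy.fun_mul hy).fun_add (hq.fun_mul (hx.fun_mul hx))).fun_add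
    ((hx.fun_mul hy).const_mul p)

lemma rpow_mul_exp_mul_eulerForm_le (h : IsDampedSol t0 b lam u u') (ht0 : 0 < t0) (hT : t0 ≤ T)
    (r K c d p : ℝ)
    (hdiss : ∀ᵐ t, t ∈ Ioo t0 T → (r - K / t) * eulerForm c d p (lam * t) (u t) (t * u' t)
      + eulerRate c d p (lam * t) (t * b t) (u t) (t * u' t) ≤ 0) :
    T ^ r * exp (K / T) * eulerForm c d p (lam * T) (u T) (T * u' T)
      ≤ t0 ^ r * exp (K / t0) * eulerForm c d p (lam * t0) (u t0) (t0 * u' t0) := by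
  refine mul_le_mul_of_ae_deriv_le (f := fun t => eulerForm c d p (lam * t) (u t) (t * u' t))
    (g := fun t => t ^ r * exp (K / t)) (γ := fun t => (r - K / t) / t) hT
    (h.absolutelyContinuousOnInterval_eulerForm hT c d p)
    (absolutelyContinuousOnInterval_of_contDiffAt hT fun t ht => ?_)
    (fun t ht => mul_nonneg (rpow_nonneg (ht0.trans ht.1).le r) (exp_pos _).le)
    (fun t ht => hasDerivAt_rpow_mul_exp_div (ht0.trans ht.1) r K) ?_
  · have ht_ne : t ≠ 0 := (ht0.trans_le ht.1).ne'
    exact (contDiffAt_rpow_const_of_ne ht_ne).mul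
      (contDiffAt_const.div contDiffAt_id ht_ne).exp
  · filter_upwards [hdiss, h.ae_hasDerivAt_eulerForm c d p] with t ht hderiv htI
    have ht_pos := ht0.trans htI.1
    rw [(hderiv htI.1 ht_pos).deriv, div_mul_eq_mul_div, ← add_div]
    exact div_nonpos_of_nonpos_of_nonneg (ht htI) ht_pos.le

end IsDampedSol

/-! ### Low frequencies -/

lemma mul_eulerForm_add_eulerRate_nonpos_of_low {m z β x y : ℝ} (hm : 0 ≤ m) (hβ : m ≤ β)
    (hz : z ^ 2 ≤ 2 * (2 - m)) :
    (m - 2) * eulerForm (1 - m / 2) (m * (2 - m)) 0 z x y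
      + eulerRate (1 - m / 2) (m * (2 - m)) 0 z β x y ≤ 0 := by
  have hg : 0 ≤ 2 - m - z ^ 2 / 2 := by linarith
  have hdiss : 0 ≤ 2 * (β - m) * y ^ 2 + m * (y - (2 - m - z ^ 2 / 2) * x) ^ 2
      + m * (2 - m - z ^ 2 / 2) * (z ^ 2 / 2) * x ^ 2 := by
    have : 0 ≤ β - m := sub_nonneg.mpr hβ
    positivity
  rw [eulerForm, eulerRate]
  linear_combination hdiss

-- `(t0 / τ) ^ s * (τ - t0)` majorizes `∫ (t0 / t) ^ (2 * s)` without degenerating at `2 * s = 1`,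
-- where the exact primitive becomes logarithmic.
lemma hasDerivAt_div_rpow_mul_sub {t0 t : ℝ} (ht0 : 0 < t0) (ht : 0 < t) (s : ℝ) :
    HasDerivAt (fun τ => (t0 / τ) ^ s * (τ - t0)) ((t0 / t) ^ s * (1 - s * (1 - t0 / t))) t := by
  have hdiv := (hasDerivAt_inv ht.ne').const_mul t0
  simp only [← div_eq_mul_inv] at hdiv
  refine ((hdiv.rpow_const (p := s) (Or.inl (div_pos ht0 ht).ne')).fun_mul
    ((hasDerivAt_id' t).sub_const t0)).congr_deriv ?_
  rw [rpow_sub_one (div_pos ht0 ht).ne']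
  field_simp
  ring

lemma rpow_two_mul_le_rpow_mul_one_sub {r s : ℝ} (hr : 0 < r) (hs : 0 ≤ s) (hs1 : s ≤ 1) :
    r ^ (2 * s) ≤ r ^ s * (1 - s * (1 - r)) := by
  have hbernoulli := rpow_one_add_le_one_add_mul_self (s := r - 1) (by linarith) hs hs1
  rw [two_mul, rpow_add hr]
  gcongr
  calc r ^ s = (1 + (r - 1)) ^ s := by rw [add_sub_cancel]
    _ ≤ 1 + s * (r - 1) := hbernoulli
    _ = 1 - s * (1 - r) := by ring

namespace IsDampedSol

variable {t0 T m p s S lam : ℝ} {b u u' : ℝ → ℝ}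

lemma rpow_mul_oscEnergy_le_of_sq_le (h : IsDampedSol t0 b lam u u') (ht0 : 0 < t0) (hT : t0 ≤ T)
    (hm : 0 ≤ m) (hb : ∀ᵐ t, t0 < t → m ≤ t * b t) (hlow : (lam * T) ^ 2 ≤ 2 * (2 - m)) :
    T ^ m * oscEnergy lam (u T) (u' T) ≤ t0 ^ m * oscData lam t0 (u t0) (u' t0) := by
  have hmono := h.rpow_mul_exp_mul_eulerForm_le ht0 hT (m - 2) 0 (1 - m / 2) (m * (2 - m)) 0 <| by
    filter_upwards [hb] with t hbt ht
    have hlow_t : (lam * t) ^ 2 ≤ 2 * (2 - m) :=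
      (sq_mul_le_sq_mul (ht0.trans ht.1).le ht.2.le).trans hlow
    simpa only [zero_div, sub_zero] using
      mul_eulerForm_add_eulerRate_nonpos_of_low hm (hbt ht.1) hlow_t
  simp only [zero_div, exp_zero, mul_one] at hmono
  have hT0 : 0 < T := ht0.trans_le hT
  rw [rpow_mul_oscEnergy hT0, rpow_mul_oscData ht0]
  refine le_trans ?_ (hmono.trans ?_) <;> gcongr <;> simp only [oscEnergy, eulerForm]
  · nlinarith [mul_nonneg (mul_nonneg hm (sub_nonneg.mpr hlow)) (sq_nonneg (u T))]
  · have hcoeff : (1 - m / 2) * (lam * t0) ^ 2 + m * (2 - m) ≤ (lam * t0) ^ 2 + 2 := by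
      nlinarith [mul_nonneg hm (sq_nonneg (lam * t0)), sq_nonneg (m - 1)]
    nlinarith [mul_le_mul_of_nonneg_right hcoeff (sq_nonneg (u t0)), sq_nonneg (t0 * u' t0)]

lemma ae_rpow_mul_deriv_mul_deriv_le (h : IsDampedSol t0 b lam u u')
    (hb : ∀ᵐ t, t0 < t → m ≤ t * b t) :
    ∀ᵐ t, t0 < t → 0 < t → t ^ m * u' t * deriv (fun s => s ^ m * u' s) t
      ≤ |t ^ m * u' t| * (lam ^ 2 * t ^ m * |u t|) := by
  filter_upwards [h.ae_hasDerivAt_deriv, hb] with t hu' hbt htt ht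
  have hdamping : 0 ≤ (t * b t - m) / t * (t ^ m * u' t) ^ 2 :=
    mul_nonneg (div_nonneg (sub_nonneg.mpr (hbt htt)) ht.le) (sq_nonneg _)
  calc t ^ m * u' t * deriv (fun s => s ^ m * u' s) t
      = -((t * b t - m) / t * (t ^ m * u' t) ^ 2) + t ^ m * u' t * -(lam ^ 2 * t ^ m * u t) := by
        rw [((hasDerivAt_rpow_const (p := m) (Or.inl ht.ne')).fun_mul (hu' htt)).deriv,
          rpow_sub_one ht.ne']
        field_simp
        ring
    _ ≤ 0 + |t ^ m * u' t| * (lam ^ 2 * t ^ m * |u t|) := by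
        refine add_le_add (neg_nonpos.mpr hdamping) ((le_abs_self _).trans_eq ?_)
        rw [abs_mul, abs_neg, abs_mul (_ * _), abs_of_nonneg (a := lam ^ 2 * _) (by positivity)]
    _ = |t ^ m * u' t| * (lam ^ 2 * t ^ m * |u t|) := zero_add _

lemma rpow_mul_abs_deriv_le_of_abs_le_rpow (h : IsDampedSol t0 b lam u u') (ht0 : 0 < t0)
    (hT : t0 ≤ T) (hb : ∀ᵐ t, t0 < t → m ≤ t * b t) (hp : 0 < m + p + 1)
    (hu : ∀ t ∈ Icc t0 T, |u t| ≤ S * t ^ p) :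
    T ^ m * |u' T| ≤ t0 ^ m * |u' t0| + lam ^ 2 * S / (m + p + 1) * T ^ (m + p + 1) := by
  have hS : 0 ≤ S := nonneg_of_mul_nonneg_left
    ((abs_nonneg _).trans (hu t0 (left_mem_Icc.mpr hT))) (rpow_pos_of_pos ht0 p)
  rw [← abs_of_pos (rpow_pos_of_pos (ht0.trans_le hT) m), ← abs_mul]
  refine abs_le_of_ae_mul_deriv_le (f := fun t => t ^ m * u' t)
    (h := fun t => t0 ^ m * |u' t0| + lam ^ 2 * S / (m + p + 1) * t ^ (m + p + 1)) hT
    ((absolutelyContinuousOnInterval_rpow_const ht0 hT m).fun_mul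
      (h.absolutelyContinuousOnInterval_deriv hT))
    (contDiffOn_const.absolutelyContinuousOnInterval.fun_add
      ((absolutelyContinuousOnInterval_rpow_const ht0 hT _).const_mul _))
    (fun t ht => ?_) ?_ ?_
  · have := ht0.trans ht.1
    positivity
  · rw [abs_mul, abs_of_pos (rpow_pos_of_pos ht0 m)]
    exact le_add_of_nonneg_right (by positivity)
  · filter_upwards [h.ae_rpow_mul_deriv_mul_deriv_le hb] with t hut ht
    have ht_pos := ht0.trans ht.1
    refine (hut ht.1 ht_pos).trans ?_
    have hh' := ((hasDerivAt_rpow_const (p := m + p + 1) (Or.inl ht_pos.ne')).const_mul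
      (lam ^ 2 * S / (m + p + 1))).const_add (t0 ^ m * |u' t0|)
    gcongr
    calc lam ^ 2 * t ^ m * |u t| ≤ lam ^ 2 * t ^ m * (S * t ^ p) := by
          gcongr
          exact hu t (Ioo_subset_Icc_self ht)
      _ = _ := by
          rw [hh'.deriv, add_sub_cancel_right, rpow_add ht_pos]
          field_simp

lemma abs_deriv_le_of_abs_le_rpow (h : IsDampedSol t0 b lam u u') (ht0 : 0 < t0)
    (hT : t0 ≤ T) (hb : ∀ᵐ t, t0 < t → m ≤ t * b t) (hp : 0 < m + p + 1)
    (hu : ∀ t ∈ Icc t0 T, |u t| ≤ S * t ^ p) :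
    |u' T| ≤ |u' t0| * (t0 / T) ^ m + lam ^ 2 * S / (m + p + 1) * T ^ (p + 1) := by
  have hT0 : 0 < T := ht0.trans_le hT
  have hpow : T ^ (m + p + 1) = T ^ m * T ^ (p + 1) := by rw [add_assoc, rpow_add hT0]
  rw [← mul_le_mul_iff_right₀ (rpow_pos_of_pos hT0 m)]
  refine (h.rpow_mul_abs_deriv_le_of_abs_le_rpow ht0 hT hb hp hu).trans_eq ?_
  rw [div_rpow ht0.le hT0.le, hpow]
  field_simp

lemma abs_le_of_abs_le_rpow (h : IsDampedSol t0 b lam u u') (ht0 : 0 < t0) (hT : t0 ≤ T)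
    (hs : 0 ≤ s) (hs1 : s ≤ 1) (hb : ∀ᵐ t, t0 < t → 2 * s ≤ t * b t) (hp : 0 < 2 * s + p + 1)
    (hp2 : 0 < p + 2) (hu : ∀ t ∈ Icc t0 T, |u t| ≤ S * t ^ p) :
    |u T| ≤ |u t0| + |u' t0| * ((t0 / T) ^ s * (T - t0))
      + lam ^ 2 * S / ((2 * s + p + 1) * (p + 2)) * T ^ (p + 2) := by
  have hS : 0 ≤ S := nonneg_of_mul_nonneg_left
    ((abs_nonneg _).trans (hu t0 (left_mem_Icc.mpr hT))) (rpow_pos_of_pos ht0 p)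
  set C := lam ^ 2 * S / ((2 * s + p + 1) * (p + 2)) with hC
  have : 0 ≤ C := by positivity
  refine abs_le_of_ae_mul_deriv_le
    (h := fun t => |u t0| + |u' t0| * ((t0 / t) ^ s * (t - t0)) + C * t ^ (p + 2)) hT
    (h.absolutelyContinuousOnInterval hT)
    (absolutelyContinuousOnInterval_of_contDiffAt hT fun t ht => ?_) (fun t ht => ?_) ?_ ?_
  · have ht_pos := ht0.trans_le ht.1
    have hpow : ContDiffAt ℝ 1 (fun t => t ^ (p + 2)) t := contDiffAt_rpow_const_of_ne ht_pos.ne'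
    have hdiv : ContDiffAt ℝ 1 (fun t => (t0 / t) ^ s) t :=
      (contDiffAt_const.div contDiffAt_id ht_pos.ne').rpow_const_of_ne (div_pos ht0 ht_pos).ne'
    fun_prop
  · have hsub := sub_nonneg.mpr ht.1.le
    have ht_pos := ht0.trans ht.1
    positivity
  · rw [sub_self, mul_zero, mul_zero, add_zero]
    exact le_add_of_nonneg_right (by positivity)
  · refine Eventually.of_forall fun t ht => ?_
    have ht_pos := ht0.trans ht.1
    have hh' := (((hasDerivAt_div_rpow_mul_sub ht0 ht_pos s).const_mul |u' t0|).const_add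
      |u t0|).fun_add ((hasDerivAt_rpow_const (p := p + 2) (Or.inl ht_pos.ne')).const_mul C)
    rw [hh'.deriv, (h.hasDerivAt ht.1.le).deriv]
    refine (le_abs_self _).trans ?_
    rw [abs_mul]
    gcongr
    have hbound := h.abs_deriv_le_of_abs_le_rpow ht0 ht.1.le hb hp fun τ hτ =>
      hu τ ⟨hτ.1, hτ.2.trans ht.2.le⟩
    calc |u' t| ≤ |u' t0| * (t0 / t) ^ (2 * s) + C * ((p + 2) * t ^ (p + 1)) := by
          refine hbound.trans_eq ?_
          rw [hC]
          field_simp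
      _ ≤ |u' t0| * ((t0 / t) ^ s * (1 - s * (1 - t0 / t)))
            + C * ((p + 2) * t ^ (p + 2 - 1)) := by
          rw [show p + 2 - 1 = p + 1 by ring]
          gcongr
          exact rpow_two_mul_le_rpow_mul_one_sub (div_pos ht0 ht_pos) hs hs1

lemma abs_le_add_mul_rpow_of_abs_le_mul_rpow (h : IsDampedSol t0 b lam u u') (ht0 : 0 < t0)
    (hT : t0 ≤ T) (hs : 0 ≤ s) (hs1 : s ≤ 1) (hb : ∀ᵐ t, t0 < t → 2 * s ≤ t * b t)
    (hlow : (lam * T) ^ 2 ≤ 4) (hu : ∀ t ∈ Icc t0 T, |u t| ≤ S * t ^ (1 - s)) :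
    |u T| ≤ (t0 ^ s * (|u' t0| + |u t0| / t0) + 2 / 3 * S) * T ^ (1 - s) := by
  have hT0 : 0 < T := ht0.trans_le hT
  have hS : 0 ≤ S := nonneg_of_mul_nonneg_left
    ((abs_nonneg _).trans (hu t0 (left_mem_Icc.mpr hT))) (rpow_pos_of_pos ht0 _)
  have hposition : |u t0| ≤ t0 ^ s * (|u t0| / t0) * T ^ (1 - s) :=
    calc |u t0| = t0 ^ s * (|u t0| / t0) * t0 ^ (1 - s) := by
          rw [rpow_sub ht0, rpow_one]; field_simp
      _ ≤ _ := by gcongr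
  have hvelocity : |u' t0| * ((t0 / T) ^ s * (T - t0)) ≤ t0 ^ s * |u' t0| * T ^ (1 - s) :=
    calc |u' t0| * ((t0 / T) ^ s * (T - t0)) ≤ |u' t0| * ((t0 / T) ^ s * T) := by
          gcongr; exact sub_le_self _ ht0.le
      _ = _ := by rw [div_rpow ht0.le hT0.le, rpow_sub hT0, rpow_one]; field_simp
  have hfeedback : lam ^ 2 * S / ((2 * s + (1 - s) + 1) * (1 - s + 2)) * T ^ (1 - s + 2)
      ≤ 2 / 3 * S * T ^ (1 - s) := by
    have hden : 6 ≤ (2 * s + (1 - s) + 1) * (1 - s + 2) := by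
      nlinarith [mul_nonneg hs (sub_nonneg.mpr hs1)]
    calc _ = (lam * T) ^ 2 * S / ((2 * s + (1 - s) + 1) * (1 - s + 2)) * T ^ (1 - s) := by
          rw [rpow_add hT0, rpow_two]; ring
      _ ≤ 4 * S / 6 * T ^ (1 - s) := by gcongr
      _ = _ := by ring
  linarith [h.abs_le_of_abs_le_rpow ht0 hT hs hs1 hb (p := 1 - s) (by linarith) (by linarith) hu]

lemma abs_le_mul_rpow (h : IsDampedSol t0 b lam u u') (ht0 : 0 < t0) (hT : t0 ≤ T)
    (hs : 0 ≤ s) (hs1 : s ≤ 1) (hb : ∀ᵐ t, t0 < t → 2 * s ≤ t * b t) (hlow : (lam * T) ^ 2 ≤ 4) :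
    ∀ t ∈ Icc t0 T, |u t| ≤ 3 * (t0 ^ s * (|u' t0| + |u t0| / t0)) * t ^ (1 - s) := by
  have hpow : ∀ t ∈ Icc t0 T, 0 < t ^ (1 - s) := fun t ht =>
    rpow_pos_of_pos (ht0.trans_le ht.1) _
  have hcont : ContinuousOn (fun t => |u t| / t ^ (1 - s)) (Icc t0 T) := fun t ht =>
    ((h.hasDerivAt ht.1).continuousAt.abs.div
      (continuousAt_rpow_const t _ (Or.inl (ht0.trans_le ht.1).ne'))
      (hpow t ht).ne').continuousWithinAt
  obtain ⟨τ, hτ, hmax⟩ := isCompact_Icc.exists_isMaxOn (nonempty_Icc.mpr hT) hcont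
  set S := |u τ| / τ ^ (1 - s)
  have hu : ∀ t ∈ Icc t0 T, |u t| ≤ S * t ^ (1 - s) := fun t ht =>
    (div_le_iff₀ (hpow t ht)).mp (hmax ht)
  have hlow_τ : (lam * τ) ^ 2 ≤ 4 := (sq_mul_le_sq_mul (ht0.trans_le hτ.1).le hτ.2).trans hlow
  have hS : S ≤ t0 ^ s * (|u' t0| + |u t0| / t0) + 2 / 3 * S :=
    (div_le_iff₀ (hpow τ hτ)).mpr <| h.abs_le_add_mul_rpow_of_abs_le_mul_rpow ht0 hτ.1 hs hs1 hb
      hlow_τ fun t ht => hu t ⟨ht.1, ht.2.trans hτ.2⟩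
  intro t ht
  refine (hu t ht).trans (mul_le_mul_of_nonneg_right ?_ (hpow t ht).le)
  linarith

lemma rpow_mul_abs_deriv_le (h : IsDampedSol t0 b lam u u') (ht0 : 0 < t0) (hT : t0 ≤ T)
    (hs : 0 ≤ s) (hs1 : s ≤ 1) (hb : ∀ᵐ t, t0 < t → 2 * s ≤ t * b t) (hlow : (lam * T) ^ 2 ≤ 4) :
    T ^ s * |u' T| ≤ 7 * (t0 ^ s * (|u' t0| + |u t0| / t0)) := by
  have hT0 : 0 < T := ht0.trans_le hT
  set W := t0 ^ s * (|u' t0| + |u t0| / t0)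
  have hW : t0 ^ s * |u' t0| ≤ W :=
    mul_le_mul_of_nonneg_left (le_add_of_nonneg_right (by positivity)) (by positivity)
  have hu' := h.abs_deriv_le_of_abs_le_rpow ht0 hT hb (by linarith)
    (h.abs_le_mul_rpow ht0 hT hs hs1 hb hlow)
  have hratio : (t0 / T) ^ (2 * s) ≤ (t0 / T) ^ s :=
    rpow_le_rpow_of_exponent_ge (div_pos ht0 hT0) ((div_le_one hT0).mpr hT) (by linarith)
  calc T ^ s * |u' T|
      ≤ T ^ s * (|u' t0| * (t0 / T) ^ s
          + lam ^ 2 * (3 * W) / (2 * s + (1 - s) + 1) * T ^ (1 - s + 1)) := by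
        refine mul_le_mul_of_nonneg_left (hu'.trans ?_) (by positivity)
        gcongr
    _ = t0 ^ s * |u' t0| + (lam * T) ^ 2 * (3 * W) / (2 + s) := by
        rw [div_rpow ht0.le hT0.le, rpow_add_one hT0.ne', rpow_sub hT0, rpow_one]
        ring_nf
        field_simp
    _ ≤ W + 4 * (3 * W) / 2 := by
        gcongr
        linarith
    _ = 7 * W := by ring

lemma rpow_mul_oscEnergy_le_of_sq_le_four (h : IsDampedSol t0 b lam u u') (ht0 : 0 < t0)
    (hT : t0 ≤ T) (hm : 0 ≤ m) (hm2 : m ≤ 2) (hb : ∀ᵐ t, t0 < t → m ≤ t * b t)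
    (hlow : (lam * T) ^ 2 ≤ 4) :
    T ^ m * oscEnergy lam (u T) (u' T) ≤ 64 * (t0 ^ m * oscData lam t0 (u t0) (u' t0)) := by
  obtain ⟨s, rfl⟩ : ∃ s, m = 2 * s := ⟨m / 2, by ring⟩
  have hs : 0 ≤ s := by linarith
  have hs1 : s ≤ 1 := by linarith
  have hT0 : 0 < T := ht0.trans_le hT
  set W := t0 ^ s * (|u' t0| + |u t0| / t0) with hW
  have hW_sq : W ^ 2 = t0 ^ (2 * s) * (|u' t0| + |u t0| / t0) ^ 2 := by
    rw [hW, mul_pow, ← rpow_two (t0 ^ s), ← rpow_mul ht0.le, mul_comm s 2]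
  have hposition : T ^ s * |u T| ≤ 3 * W * T :=
    calc T ^ s * |u T| ≤ T ^ s * (3 * W * T ^ (1 - s)) := by
          gcongr
          exact h.abs_le_mul_rpow ht0 hT hs hs1 hb hlow T (right_mem_Icc.mpr hT)
      _ = 3 * W * T := by rw [rpow_sub hT0, rpow_one]; field_simp
  have hvelocity : T ^ s * |u' T| ≤ 7 * W := h.rpow_mul_abs_deriv_le ht0 hT hs hs1 hb hlow
  calc T ^ (2 * s) * oscEnergy lam (u T) (u' T)
      = (T ^ s * |u' T|) ^ 2 + lam ^ 2 * (T ^ s * |u T|) ^ 2 := by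
        rw [oscEnergy, mul_comm 2 s, rpow_mul hT0.le, rpow_two, mul_pow, mul_pow, sq_abs, sq_abs]
        ring
    _ ≤ (7 * W) ^ 2 + lam ^ 2 * (3 * W * T) ^ 2 := by gcongr
    _ = (49 + 9 * (lam * T) ^ 2) * W ^ 2 := by ring
    _ ≤ (49 + 9 * 4) * (t0 ^ (2 * s) * (3 / 4 * oscData lam t0 (u t0) (u' t0))) := by
        rw [hW_sq]
        gcongr
        exact sq_abs_add_abs_div_le_oscData
    _ ≤ 64 * (t0 ^ (2 * s) * oscData lam t0 (u t0) (u' t0)) := by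
        linarith [mul_nonneg (rpow_nonneg ht0.le (2 * s))
          (oscData_nonneg (lam := lam) (t := t0) (x := u t0) (v := u' t0))]

lemma rpow_mul_oscEnergy_le_of_low (h : IsDampedSol t0 b lam u u') (ht0 : 0 < t0)
    (hT : t0 ≤ T) (hm : 0 ≤ m) (hm2 : m ≤ 2) (hb : ∀ᵐ t, t0 < t → m ≤ t * b t)
    (hlam : 0 ≤ lam) (hlow : lam * T ≤ max 1 m) :
    T ^ m * oscEnergy lam (u T) (u' T)
      ≤ exp (m * (11 / 2)) * (t0 ^ m * oscData lam t0 (u t0) (u' t0)) := by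
  have hdata : 0 ≤ t0 ^ m * oscData lam t0 (u t0) (u' t0) :=
    mul_nonneg (rpow_nonneg ht0.le m) oscData_nonneg
  have hz : 0 ≤ lam * T := mul_nonneg hlam (ht0.trans_le hT).le
  rcases le_total m 1 with hm1 | hm1
  · rw [max_eq_left hm1] at hlow
    refine (h.rpow_mul_oscEnergy_le_of_sq_le ht0 hT hm hb ?_).trans
      (le_mul_of_one_le_left hdata (one_le_exp (by positivity)))
    nlinarith
  · rw [max_eq_right hm1] at hlow
    refine (h.rpow_mul_oscEnergy_le_of_sq_le_four ht0 hT hm hm2 hb (by nlinarith)).trans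
      (mul_le_mul_of_nonneg_right ?_ hdata)
    calc (64 : ℝ) ≤ 2.7 ^ 5 := by norm_num
      _ ≤ exp 1 ^ 5 := by gcongr; exact (by norm_num : (2.7 : ℝ) < 2.7182818283).le.trans
                                   exp_one_gt_d9.le
      _ = exp (5 * 1) := (exp_nat_mul 1 5).symm
      _ ≤ exp (m * (11 / 2)) := exp_le_exp.mpr (by linarith)

end IsDampedSol

/-! ### High frequencies -/

section Algebra

variable {m M z κ β x y : ℝ}

lemma abs_mul_le_oscEnergy_div (hz : 0 < z) : |x * y| ≤ oscEnergy z x y / (2 * z) := by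
  have hamgm := two_mul_le_add_sq (z * |x|) |y|
  rw [le_div_iff₀ (by positivity), abs_mul, oscEnergy]
  rw [mul_pow, sq_abs, sq_abs] at hamgm
  linarith

lemma abs_eulerForm_sub_oscEnergy_le (hm : 0 ≤ m) (hz : 0 < z) (hκ : m ≤ 2 * κ * z) :
    |eulerForm 1 0 m z x y - oscEnergy z x y| ≤ κ * oscEnergy z x y :=
  calc |eulerForm 1 0 m z x y - oscEnergy z x y| = m * |x * y| := by
        rw [eulerForm, oscEnergy, ← abs_of_nonneg hm, ← abs_mul, abs_of_nonneg hm]; ring_nf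
    _ ≤ m * (oscEnergy z x y / (2 * z)) := by gcongr; exact abs_mul_le_oscEnergy_div hz
    _ = m / (2 * z) * oscEnergy z x y := by ring
    _ ≤ κ * oscEnergy z x y :=
        mul_le_mul_of_nonneg_right ((div_le_iff₀ (by positivity)).mpr (by linarith))
          oscEnergy_nonneg

lemma mul_eulerForm_add_eulerRate_nonpos_of_high (hm : 0 ≤ m) (hz : 0 < z) (hmz : m ≤ z)
    (hmβ : m ≤ β) (hβM : β ≤ M) :
    (m - 2 - m * (M + 1) / z) * eulerForm 1 0 m z x y + eulerRate 1 0 m z β x y ≤ 0 := by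
  have hform : oscEnergy z x y / 2 ≤ eulerForm 1 0 m z x y := by
    linarith [abs_le.mp (abs_eulerForm_sub_oscEnergy_le (κ := 1 / 2) (x := x) (y := y) hm hz
      (by linarith))]
  have hrate : (m - 2) * eulerForm 1 0 m z x y + eulerRate 1 0 m z β x y
      = -(2 * (β - m) * y ^ 2) + m * (β + 1 - m) * -(x * y) := by
    rw [eulerForm, eulerRate]; ring
  have hdamping : 0 ≤ 2 * (β - m) * y ^ 2 := by
    have : 0 ≤ β - m := sub_nonneg.mpr hmβ
    positivity
  have hcross : m * (β + 1 - m) * -(x * y) ≤ m * (M + 1) / z * eulerForm 1 0 m z x y :=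
    calc m * (β + 1 - m) * -(x * y) ≤ m * (M + 1) * (oscEnergy z x y / (2 * z)) := by
          have hxy : -(x * y) ≤ oscEnergy z x y / (2 * z) :=
            (neg_le_abs _).trans (abs_mul_le_oscEnergy_div hz)
          have hE : 0 ≤ oscEnergy z x y / (2 * z) := div_nonneg oscEnergy_nonneg (by positivity)
          refine (mul_le_mul_of_nonneg_left hxy (mul_nonneg hm (by linarith))).trans ?_
          gcongr
          linarith
      _ = m * (M + 1) / z * (oscEnergy z x y / 2) := by ring
      _ ≤ _ := by
          have : 0 ≤ M + 1 := by linarith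
          gcongr
  linarith

lemma one_add_le_one_sub_mul_exp (hκ : 0 ≤ κ) (hκ_half : κ ≤ 1 / 2) :
    1 + κ ≤ (1 - κ) * exp (3 * κ) :=
  calc 1 + κ ≤ (1 - κ) * (1 + 3 * κ + (3 * κ) ^ 2 / 2) := by nlinarith [mul_nonneg hκ hκ]
    _ ≤ (1 - κ) * exp (3 * κ) :=
        mul_le_mul_of_nonneg_left (quadratic_le_exp_of_nonneg (by positivity)) (by linarith)

lemma one_add_div_le_one_sub_div_mul_exp (hm : 0 ≤ m) (hz : 1 ≤ z) (hmz : m ≤ z) :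
    1 + m / (2 * z) ≤ (1 - m / (2 * z)) * exp (3 / 2 * m) := by
  have : 0 < z := one_pos.trans_le hz
  have hhalf : m / (2 * z) ≤ 1 / 2 := by
    rw [div_le_iff₀ (by positivity)]; linarith
  have hm_half : m / (2 * z) ≤ m / 2 := by
    gcongr
    linarith
  exact (one_add_le_one_sub_mul_exp (by positivity) hhalf).trans
    (mul_le_mul_of_nonneg_left (exp_le_exp.mpr (by linarith)) (by linarith))

end Algebra

namespace IsDampedSol

variable {t0 T m M lam : ℝ} {b u u' : ℝ → ℝ}

lemma rpow_mul_eulerForm_le_of_high (h : IsDampedSol t0 b lam u u') (ht0 : 0 < t0) (hT : t0 ≤ T)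
    (hm : 0 ≤ m) (hmM : m ≤ M) (hb : ∀ᵐ t, t0 < t → m ≤ t * b t ∧ t * b t ≤ M)
    (hhigh : max 1 m ≤ lam * t0) :
    T ^ (m - 2) * eulerForm 1 0 m (lam * T) (u T) (T * u' T)
      ≤ exp (m * (M + 1)) * (t0 ^ (m - 2) * eulerForm 1 0 m (lam * t0) (u t0) (t0 * u' t0)) := by
  have hT0 : 0 < T := ht0.trans_le hT
  have hz0 : 0 < lam * t0 := one_pos.trans_le ((le_max_left 1 m).trans hhigh)
  have hlam : 0 < lam := pos_of_mul_pos_left hz0 ht0.le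
  have hmz : ∀ t, t0 ≤ t → m ≤ lam * t := fun t ht =>
    (le_max_right 1 m).trans (hhigh.trans (by gcongr))
  have hform : ∀ t, t0 ≤ t → 0 ≤ eulerForm 1 0 m (lam * t) (u t) (t * u' t) := fun t ht => by
    have := abs_le.mp (abs_eulerForm_sub_oscEnergy_le (κ := 1) (x := u t) (y := t * u' t) hm
      (mul_pos hlam (ht0.trans_le ht)) (by linarith [hmz t ht]))
    linarith
  have hmono := h.rpow_mul_exp_mul_eulerForm_le ht0 hT (m - 2) (m * (M + 1) / lam) 1 0 m <| by
    filter_upwards [hb] with t hbt ht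
    rw [div_div]
    exact mul_eulerForm_add_eulerRate_nonpos_of_high hm (mul_pos hlam (ht0.trans ht.1))
      (hmz t ht.1.le) (hbt ht.1).1 (hbt ht.1).2
  have hK : 0 ≤ m * (M + 1) := mul_nonneg hm (by linarith)
  have hK0 : m * (M + 1) / lam / t0 ≤ m * (M + 1) := by
    rw [div_div]
    exact div_le_self hK ((le_max_left 1 m).trans hhigh)
  calc T ^ (m - 2) * eulerForm 1 0 m (lam * T) (u T) (T * u' T)
      ≤ T ^ (m - 2) * exp (m * (M + 1) / lam / T)
          * eulerForm 1 0 m (lam * T) (u T) (T * u' T) := by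
        refine mul_le_mul_of_nonneg_right (le_mul_of_one_le_right (by positivity) ?_) (hform T hT)
        exact one_le_exp (by positivity)
    _ ≤ t0 ^ (m - 2) * exp (m * (M + 1) / lam / t0)
          * eulerForm 1 0 m (lam * t0) (u t0) (t0 * u' t0) := hmono
    _ ≤ t0 ^ (m - 2) * exp (m * (M + 1))
          * eulerForm 1 0 m (lam * t0) (u t0) (t0 * u' t0) := by
        have := hform t0 le_rfl
        gcongr
    _ = _ := by ring

lemma rpow_mul_oscEnergy_le_of_high (h : IsDampedSol t0 b lam u u') (ht0 : 0 < t0) (hT : t0 ≤ T)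
    (hm : 0 ≤ m) (hmM : m ≤ M) (hb : ∀ᵐ t, t0 < t → m ≤ t * b t ∧ t * b t ≤ M)
    (hhigh : max 1 m ≤ lam * t0) :
    T ^ m * oscEnergy lam (u T) (u' T)
      ≤ exp (m * (M + 5 / 2)) * (t0 ^ m * oscEnergy lam (u t0) (u' t0)) := by
  have hT0 : 0 < T := ht0.trans_le hT
  obtain ⟨hz1, hmz⟩ := max_le_iff.mp hhigh
  have hz0 : 0 < lam * t0 := one_pos.trans_le hz1
  have hlam : 0 < lam := pos_of_mul_pos_left hz0 ht0.le
  obtain ⟨κ, hκ⟩ : ∃ κ, κ = m / (2 * (lam * t0)) := ⟨_, rfl⟩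
  have hκ_lt : κ < 1 := by
    rw [hκ, div_lt_one (by positivity)]; linarith
  have hmκ : m = 2 * κ * (lam * t0) := by rw [hκ]; field_simp
  have hκ_nonneg : 0 ≤ κ := hκ ▸ by positivity
  have hlower := (abs_le.mp (abs_eulerForm_sub_oscEnergy_le (x := u T) (y := T * u' T) hm
    (mul_pos hlam hT0) (hmκ.le.trans (by gcongr)))).1
  have hupper := (abs_le.mp (abs_eulerForm_sub_oscEnergy_le (x := u t0) (y := t0 * u' t0) hm
    hz0 hmκ.le)).2
  have hE0 : 0 ≤ oscEnergy (lam * t0) (u t0) (t0 * u' t0) := oscEnergy_nonneg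
  rw [rpow_mul_oscEnergy hT0, rpow_mul_oscEnergy ht0]
  refine le_of_mul_le_mul_left ?_ (sub_pos.mpr hκ_lt)
  calc (1 - κ) * (T ^ (m - 2) * oscEnergy (lam * T) (u T) (T * u' T))
      = T ^ (m - 2) * ((1 - κ) * oscEnergy (lam * T) (u T) (T * u' T)) := by ring
    _ ≤ T ^ (m - 2) * eulerForm 1 0 m (lam * T) (u T) (T * u' T) := by gcongr; linarith
    _ ≤ exp (m * (M + 1)) * (t0 ^ (m - 2) * eulerForm 1 0 m (lam * t0) (u t0) (t0 * u' t0)) :=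
        h.rpow_mul_eulerForm_le_of_high ht0 hT hm hmM hb hhigh
    _ ≤ exp (m * (M + 1)) * (t0 ^ (m - 2)
          * ((1 - κ) * exp (3 / 2 * m) * oscEnergy (lam * t0) (u t0) (t0 * u' t0))) := by
        gcongr
        calc _ ≤ (1 + κ) * oscEnergy (lam * t0) (u t0) (t0 * u' t0) := by linarith
          _ ≤ _ := by
            gcongr
            exact hκ ▸ one_add_div_le_one_sub_div_mul_exp hm hz1 hmz
    _ = _ := by
        rw [show m * (M + 5 / 2) = m * (M + 1) + 3 / 2 * m by ring, exp_add]; ring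

end IsDampedSol

/-! ### The decay estimate -/

namespace IsDampedSol

variable {t0 T m M lam : ℝ} {b u u' : ℝ → ℝ}

lemma rpow_mul_oscEnergy_le (h : IsDampedSol t0 b lam u u') (ht0 : 0 < t0) (hT : t0 ≤ T)
    (hlam : 0 ≤ lam) (hm : 0 ≤ m) (hm2 : m ≤ 2) (hmM : m ≤ M)
    (hb : ∀ᵐ t, t0 < t → m ≤ t * b t ∧ t * b t ≤ M) :
    T ^ m * oscEnergy lam (u T) (u' T)
      ≤ exp (m * (M + 8)) * (t0 ^ m * oscData lam t0 (u t0) (u' t0)) := by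
  have hb_low : ∀ᵐ t, t0 < t → m ≤ t * b t := hb.mono fun t ht htt => (ht htt).1
  have : 0 ≤ M := hm.trans hmM
  have hdata : 0 ≤ t0 ^ m * oscData lam t0 (u t0) (u' t0) :=
    mul_nonneg (rpow_nonneg ht0.le m) oscData_nonneg
  rcases le_total (lam * T) (max 1 m) with hlow | hhigh
  · refine (h.rpow_mul_oscEnergy_le_of_low ht0 hT hm hm2 hb_low hlam hlow).trans ?_
    gcongr
    linarith
  rcases le_total (max 1 m) (lam * t0) with hhigh0 | hlow0
  · refine (h.rpow_mul_oscEnergy_le_of_high ht0 hT hm hmM hb hhigh0).trans ?_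
    refine mul_le_mul (exp_le_exp.mpr (by gcongr; norm_num)) ?_
      (mul_nonneg (rpow_nonneg ht0.le m) oscEnergy_nonneg) (exp_pos _).le
    gcongr
    exact oscEnergy_le_oscData
  obtain ⟨t1, ⟨ht01, ht1T⟩, ht1⟩ : ∃ t1 ∈ Icc t0 T, lam * t1 = max 1 m :=
    intermediate_value_Icc hT (by fun_prop) ⟨hlow0, hhigh⟩
  calc T ^ m * oscEnergy lam (u T) (u' T)
      ≤ exp (m * (M + 5 / 2)) * (t1 ^ m * oscEnergy lam (u t1) (u' t1)) :=
        (h.mono ht01).rpow_mul_oscEnergy_le_of_high (ht0.trans_le ht01) ht1T hm hmM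
          (hb.mono fun t ht htt => ht (ht01.trans_lt htt)) ht1.ge
    _ ≤ exp (m * (M + 5 / 2))
          * (exp (m * (11 / 2)) * (t0 ^ m * oscData lam t0 (u t0) (u' t0))) :=
        mul_le_mul_of_nonneg_left
          (h.rpow_mul_oscEnergy_le_of_low ht0 ht01 hm hm2 hb_low hlam ht1.le) (exp_pos _).le
    _ = exp (m * (M + 8)) * (t0 ^ m * oscData lam t0 (u t0) (u' t0)) := by
        rw [← mul_assoc, ← exp_add]; ring_nf

lemma oscEnergy_le (h : IsDampedSol t0 b lam u u') (ht0 : 0 < t0) (hT : t0 ≤ T)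
    (hm : 0 ≤ m) (hm2 : m ≤ 2) (hmM : m ≤ M) (hb : ∀ᵐ t, t0 < t → m ≤ t * b t ∧ t * b t ≤ M) :
    oscEnergy lam (u T) (u' T)
      ≤ exp (m * (M + 8)) * (t0 / T) ^ m * oscData lam t0 (u t0) (u' t0) := by
  have hT0 : 0 < T := ht0.trans_le hT
  have hdecay := h.abs_frequency.rpow_mul_oscEnergy_le ht0 hT (abs_nonneg lam) hm hm2 hmM hb
  rw [oscEnergy_abs, oscData_abs] at hdecay
  rw [← mul_le_mul_iff_right₀ (rpow_pos_of_pos hT0 m)]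
  refine hdecay.trans_eq ?_
  rw [div_rpow ht0.le hT0.le]
  field_simp

end IsDampedSol

theorem decay_general_oscillations_PDE_general
    {X : Type*} [MeasurableSpace X] (μ : Measure X)
    (t0 m M : ℝ) (ht0 : 0 < t0) (hm : 0 ≤ m) (hmM : m ≤ M)
    (Λ : X → ℝ) (b : ℝ → ℝ)
    (hb : ∀ᵐ t, t0 ≤ t → m / t ≤ b t ∧ b t ≤ M / t)
    (u u' : ℝ → X → ℝ)
    (hsol : ∀ᵐ ξ ∂μ, IsDampedSol t0 b (Λ ξ) (fun t => u t ξ) (fun t => u' t ξ)) :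
    ∀ t ≥ t0,
      (∫⁻ ξ, ENNReal.ofReal (u' t ξ ^ 2 + Λ ξ ^ 2 * u t ξ ^ 2) ∂μ) ≤
        ENNReal.ofReal (Real.exp (min m 2 * (M + 8))) *
          (∫⁻ ξ, ENNReal.ofReal
            (4 * u' t0 ξ ^ 2 + (Λ ξ ^ 2 + 2 / t0 ^ 2) * u t0 ξ ^ 2) ∂μ) *
          ENNReal.ofReal ((t0 / t) ^ (min m 2)) := by
  intro T hT
  have hb' : ∀ᵐ t, t0 < t → min m 2 ≤ t * b t ∧ t * b t ≤ M := by
    filter_upwards [hb] with t hbt ht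
    rw [← div_le_iff₀' (ht0.trans ht), ← le_div_iff₀' (ht0.trans ht)]
    exact ⟨(div_le_div_of_nonneg_right (min_le_left m 2) (ht0.trans ht).le).trans (hbt ht.le).1,
      (hbt ht.le).2⟩
  have hpointwise : ∀ᵐ ξ ∂μ, oscEnergy (Λ ξ) (u T ξ) (u' T ξ) ≤ exp (min m 2 * (M + 8))
      * (t0 / T) ^ min m 2 * oscData (Λ ξ) t0 (u t0 ξ) (u' t0 ξ) := by
    filter_upwards [hsol] with ξ hξ
    exact hξ.oscEnergy_le ht0 hT (le_min hm zero_le_two) (min_le_right m 2)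
      ((min_le_left m 2).trans hmM) hb'
  have hC : 0 ≤ exp (min m 2 * (M + 8)) * (t0 / T) ^ min m 2 :=
    mul_nonneg (exp_pos _).le (rpow_nonneg (div_nonneg ht0.le (ht0.le.trans hT)) _)
  rw [mul_right_comm, ← ENNReal.ofReal_mul (exp_pos _).le,
    ← lintegral_const_mul' _ _ ENNReal.ofReal_ne_top]
  refine lintegral_mono_ae (hpointwise.mono fun ξ hξ => ?_)
  rw [← ENNReal.ofReal_mul hC]
  exact ENNReal.ofReal_le_ofReal hξ

theorem decay_general_oscillations_PDE
    {X : Type*} [MeasurableSpace X] (μ : Measure X)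
    (t0 m M : ℝ) (ht0 : 0 < t0) (hm : 0 < m) (hmM : m ≤ M)
    (Λ : X → ℝ) (hΛmeas : Measurable Λ) (hΛpos : ∀ ξ, 0 ≤ Λ ξ)
    (b : ℝ → ℝ) (hbmeas : Measurable b)
    (hb : ∀ t ≥ t0, m / t ≤ b t ∧ b t ≤ M / t)
    (u u' : ℝ → X → ℝ)
    (hsol : ∀ ξ, IsDampedSol t0 b (Λ ξ) (fun t => u t ξ) (fun t => u' t ξ))
    (hmeas : ∀ t ≥ t0, Measurable (u t) ∧ Measurable (u' t)) :
    ∀ t ≥ t0,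
      (∫⁻ ξ, ENNReal.ofReal (u' t ξ ^ 2 + Λ ξ ^ 2 * u t ξ ^ 2) ∂μ) ≤
        ENNReal.ofReal (Real.exp (m * (M + 8))) *
          (∫⁻ ξ, ENNReal.ofReal
            (4 * u' t0 ξ ^ 2 + (Λ ξ ^ 2 + 2 / t0 ^ 2) * u t0 ξ ^ 2) ∂μ) *
          ENNReal.ofReal ((t0 / t) ^ (min m 2)) := by
  intro t ht
  refine (decay_general_oscillations_PDE_general μ t0 m M ht0 hm.le hmM Λ b
    (Eventually.of_forall hb) u u' (Eventually.of_forall hsol) t ht).trans ?_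
  gcongr
  exacts [by linarith, min_le_left m 2]
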